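/- arXiv:1705.06894 — 2 statements merged into one kernel-verified Lean document; each statement's English description precedes it below -/
import Mathlib

section
/- Suppose h ∉ OPT and l ∈ OPT. Then r_h + r_l > (Δ_h + Δ_l)/2, and consequently any c ∈ {h, l} with r_c = max(r_h, r_l) satisfies r_c ≥ Δ_c/4. -/
/-!
The thresholds `μ_(K+1) < μ_(K)` lie between `μ h` and `μ l`, so each of the two gaps is at most
`μ l - μ h`. On the other hand the estimates rank `h` at least as high as `l`, the wrong way round,
which the confidence radii allow only if `μ l - μ h < r h + r l`. Hence even the larger of the two
gaps is below `r h + r l`, which is at most twice the larger radius.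
-/

section OrderedGroup

variable {ι G : Type*} [AddCommGroup G] [LinearOrder G] [IsOrderedAddMonoid G]

theorem sub_lt_add_of_abs_sub_lt_of_le {x y x' y' a b : G} (hx : |x' - x| < a)
    (hy : |y' - y| < b) (hle : y' ≤ x') : y - x < a + b :=
  calc
    y - x = (x' - x) + (y - y') - (x' - y') := by abel
    _ ≤ (x' - x) + (y - y') := sub_le_self _ (sub_nonneg.2 hle)
    _ < a + b := add_lt_add (abs_sub_lt_iff.1 hx).1 (abs_sub_lt_iff.1 hy).2

/-- The gap of arm `i`: its distance to the best arm outside `OPT` if `i ∈ OPT`, and to the worst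
arm of `OPT` otherwise. The thresholds `mK` and `mK1` play the roles of `μ_(K)` and `μ_(K+1)`; they
are parameters, so that neither `OPT` nor the set of arms has to be finite. -/
def gap (OPT : Set ι) [DecidablePred (· ∈ OPT)] (μ : ι → G) (mK mK1 : G) (i : ι) : G :=
  if i ∈ OPT then μ i - mK1 else mK - μ i

variable {OPT : Set ι} [DecidablePred (· ∈ OPT)] {μ : ι → G} {mK mK1 : G} {h l : ι}

theorem max_gap_le_sub (hin : ∀ i ∈ OPT, mK ≤ μ i) (hout : ∀ i ∉ OPT, μ i ≤ mK1)
    (hhO : h ∉ OPT) (hlO : l ∈ OPT) :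
    max (gap OPT μ mK mK1 h) (gap OPT μ mK mK1 l) ≤ μ l - μ h := by
  rw [gap, gap, if_neg hhO, if_pos hlO]
  exact max_le (sub_le_sub_right (hin l hlO) _) (sub_le_sub_left (hout h hhO) _)

theorem stmt_8_general (hin : ∀ i ∈ OPT, mK ≤ μ i) (hout : ∀ i ∉ OPT, μ i ≤ mK1)
    {μh r : ι → G} (hconf_h : |μh h - μ h| < r h) (hconf_l : |μh l - μ l| < r l)
    (hle : μh l ≤ μh h) (hhO : h ∉ OPT) (hlO : l ∈ OPT) :
    max (gap OPT μ mK mK1 h) (gap OPT μ mK mK1 l) < r h + r l ∧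
      ∀ c, (c = h ∨ c = l) → r c = max (r h) (r l) → gap OPT μ mK mK1 c < 2 • r c := by
  have max_gap_lt : max (gap OPT μ mK mK1 h) (gap OPT μ mK mK1 l) < r h + r l :=
    (max_gap_le_sub hin hout hhO hlO).trans_lt
      (sub_lt_add_of_abs_sub_lt_of_le hconf_h hconf_l hle)
  refine ⟨max_gap_lt, fun c hc hmax => ?_⟩
  calc
    gap OPT μ mK mK1 c ≤ max (gap OPT μ mK mK1 h) (gap OPT μ mK mK1 l) := by
      rcases hc with rfl | rfl
      exacts [le_max_left _ _, le_max_right _ _]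
    _ < r h + r l := max_gap_lt
    _ ≤ max (r h) (r l) + max (r h) (r l) := add_le_add (le_max_left _ _) (le_max_right _ _)
    _ = 2 • r c := by rw [hmax, two_nsmul]

end OrderedGroup

/-- Suppose h ∉ OPT and l ∈ OPT. Then r_h + r_l > (Δ_h + Δ_l)/2, and
consequently any c ∈ {h, l} with r_c = max(r_h, r_l) satisfies r_c ≥ Δ_c/4. -/
theorem stmt_8 {N K : ℕ} (hK1 : 1 ≤ K) (hKN : K < N)
    (μ : Fin N → ℝ) (OPT : Finset (Fin N)) (mK mK1 : ℝ)
    (hcard : OPT.card = K)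
    (horder : mK1 < mK)
    (hin : ∀ i ∈ OPT, mK ≤ μ i)
    (hout : ∀ i ∉ OPT, μ i ≤ mK1)
    (hattK : ∃ i ∈ OPT, μ i = mK)
    (hattK1 : ∃ i ∉ OPT, μ i = mK1)
    (Δ : Fin N → ℝ)
    (hΔ : ∀ i, Δ i = if i ∈ OPT then μ i - mK1 else mK - μ i)
    (μh r : Fin N → ℝ) (hr : ∀ i, 0 < r i) (hconf : ∀ i, |μh i - μ i| < r i)
    (High : Finset (Fin N)) (hHcard : High.card = K)
    (hHigh : ∀ i ∈ High, ∀ j ∉ High, μh j ≤ μh i)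
    (h l : Fin N) (hhH : h ∈ High) (hlH : l ∉ High)
    (hhmin : ∀ i ∈ High, μh h - r h ≤ μh i - r i)
    (hlmax : ∀ i ∉ High, μh i + r i ≤ μh l + r l)
    (hhO : h ∉ OPT) (hlO : l ∈ OPT) :
    r h + r l > (Δ h + Δ l) / 2 ∧
      ∀ c : Fin N, (c = h ∨ c = l) → r c = max (r h) (r l) → r c ≥ Δ c / 4 := by
  obtain rfl : Δ = gap (OPT : Set (Fin N)) μ mK mK1 := funext hΔ
  obtain ⟨hsum, hmax⟩ := stmt_8_general (OPT := (OPT : Set (Fin N))) hin hout (hconf h) (hconf l)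
    (hHigh h hhH l hlH) hhO hlO
  refine ⟨by linarith [(max_lt_iff.1 hsum).1, (max_lt_iff.1 hsum).2], fun c hc hrc => ?_⟩
  linarith [hr c, two_nsmul (r c) ▸ hmax c hc hrc]
end

section
/- Suppose e ∈ OPT, e ∈ M \ M̃, and u_e ≥ u_a for every a ∈ M △ M̃. Then u_e ≥ Δ_e/4. -/
/-!
Since `e ∈ OPT \ M̃` and `|M̃| = |OPT|`, some arm `j ∈ M̃` lies outside `OPT`, and `μ̃ e ≤ μ̃ j`
because `e` was left out of `M̃`. Each `μ̃ i` is within `2 u i` of `μ i`, so `μ e - 2 u e < μ̃ e`.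
On the other side `μ̃ j < μ j` if `j ∈ M`, while `μ̃ j < μ j + 2 u j ≤ μ j + 2 u e` if `j ∈ M̃ \ M`.
Hence the gap of `e`, which is at most `μ e - μ j`, is less than `4 u e`.
-/

theorem exists_mem_notMem_of_card_le {ι : Type*} {s t : Finset ι} (hcard : s.card ≤ t.card)
    {e : ι} (hes : e ∈ s) (het : e ∉ t) : ∃ j ∈ t, j ∉ s :=
  Finset.not_subset.mp fun hts => het (Finset.eq_of_subset_of_card_le hts hcard ▸ hes)

section AdversarialMean

variable {ι R : Type*} [DecidableEq ι] [CommRing R] [LinearOrder R]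

/-- The adversarial estimate `μ̃` of the means: from the empirical means `μh` with confidence
radii `u`, the arms of the candidate set `M` get their lower confidence bound and all other arms
their upper one. An optimal set for these values is the strongest challenger to `M`. -/
def adversarialMean (M : Finset ι) (μh u : ι → R) (i : ι) : R :=
  if i ∈ M then μh i - u i else μh i + u i

variable [IsStrictOrderedRing R] {M : Finset ι} {μ μh u : ι → R} {i : ι}

theorem adversarialMean_lt_of_mem (hconf : |μh i - μ i| < u i) (hi : i ∈ M) :
    adversarialMean M μh u i < μ i := by
  rw [adversarialMean, if_pos hi]
  exact sub_lt_comm.mp (abs_lt.mp hconf).2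

theorem abs_adversarialMean_sub_lt (hconf : |μh i - μ i| < u i) :
    |adversarialMean M μh u i - μ i| < 2 * u i := by
  have hu : 0 < u i := (abs_nonneg _).trans_lt hconf
  obtain ⟨hlower, hupper⟩ := abs_lt.mp hconf
  rw [adversarialMean, abs_lt]
  split_ifs <;> constructor <;> linarith

theorem adversarialMean_lt_add_two_mul (hconf : |μh i - μ i| < u i) {r : R} (hr : 0 ≤ r)
    (hur : i ∉ M → u i ≤ r) : adversarialMean M μh u i < μ i + 2 * r := by
  by_cases hi : i ∈ M
  · linarith [adversarialMean_lt_of_mem hconf hi]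
  · linarith [(abs_lt.mp (abs_adversarialMean_sub_lt (M := M) hconf)).2, hur hi]

theorem sub_lt_four_mul_of_adversarialMean_le {e j : ι} (he : |μh e - μ e| < u e)
    (hj : |μh j - μ j| < u j) (hle : adversarialMean M μh u e ≤ adversarialMean M μh u j)
    (hu : j ∉ M → u j ≤ u e) : μ e - μ j < 4 * u e := by
  have hlower : μ e - 2 * u e < adversarialMean M μh u e := by
    linarith [(abs_lt.mp (abs_adversarialMean_sub_lt (M := M) he)).1]
  have hupper : adversarialMean M μh u j < μ j + 2 * u e :=
    adversarialMean_lt_add_two_mul hj ((abs_nonneg _).trans he.le) hu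
  linarith

theorem stmt_15_general {OPT Mt : Finset ι} {m : R} (hcard : OPT.card ≤ Mt.card)
    (hout : ∀ i ∉ OPT, μ i ≤ m) (hconf : ∀ i, |μh i - μ i| < u i)
    (hMttop : ∀ i ∈ Mt, ∀ j ∉ Mt, adversarialMean M μh u j ≤ adversarialMean M μh u i)
    {e : ι} (heO : e ∈ OPT) (heMt : e ∉ Mt) (hmax : ∀ a ∈ Mt \ M, u a ≤ u e) :
    μ e - m < 4 * u e := by
  obtain ⟨j, hjMt, hjO⟩ := exists_mem_notMem_of_card_le hcard heO heMt
  calc μ e - m ≤ μ e - μ j := sub_le_sub_left (hout j hjO) _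
    _ < 4 * u e := sub_lt_four_mul_of_adversarialMean_le (hconf e) (hconf j)
      (hMttop j hjMt e heMt) fun hjM => hmax j (Finset.mem_sdiff.mpr ⟨hjMt, hjM⟩)

end AdversarialMean

/-- Suppose e ∈ OPT, e ∈ M \ M̃, and u_e ≥ u_a for every a ∈ M △ M̃.
Then u_e ≥ Δ_e/4. -/
theorem stmt_15 {N K : ℕ} (hK1 : 1 ≤ K) (hKN : K < N)
    (μ : Fin N → ℝ) (OPT : Finset (Fin N)) (mK mK1 : ℝ)
    (hcard : OPT.card = K)
    (horder : mK1 < mK)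
    (hin : ∀ i ∈ OPT, mK ≤ μ i)
    (hout : ∀ i ∉ OPT, μ i ≤ mK1)
    (hattK : ∃ i ∈ OPT, μ i = mK)
    (hattK1 : ∃ i ∉ OPT, μ i = mK1)
    (Δ : Fin N → ℝ)
    (hΔ : ∀ i, Δ i = if i ∈ OPT then μ i - mK1 else mK - μ i)
    (μh u : Fin N → ℝ) (hu : ∀ i, 0 < u i) (hconf : ∀ i, |μh i - μ i| < u i)
    (M Mt : Finset (Fin N)) (hMcard : M.card = K) (hMtcard : Mt.card = K)
    (hMtop : ∀ i ∈ M, ∀ j ∉ M, μh j ≤ μh i)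
    (μt : Fin N → ℝ)
    (hμt : ∀ i, μt i = if i ∈ M then μh i - u i else μh i + u i)
    (hMttop : ∀ i ∈ Mt, ∀ j ∉ Mt, μt j ≤ μt i)
    (e : Fin N) (heO : e ∈ OPT) (he : e ∈ M \ Mt)
    (hmax : ∀ a ∈ (M \ Mt) ∪ (Mt \ M), u a ≤ u e) :
    u e ≥ Δ e / 4 := by
  obtain rfl : μt = adversarialMean M μh u := funext hμt
  have hgap : μ e - mK1 < 4 * u e :=
    stmt_15_general (hcard.trans hMtcard.symm).le hout hconf hMttop heO (Finset.mem_sdiff.mp he).2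
      fun a ha => hmax a (Finset.mem_union_right _ ha)
  rw [hΔ e, if_pos heO]
  linarith
end
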